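/- Let F be a field, G a finite group, and H ≤ G a subgroup. Then the permutation F[G]-module on the coset space of H in G is a projective F[G]-module if and only if the characteristic of F does not divide |H|. -/

import Mathlib

open MulAction
open scoped Classical

/-!
The coset `H` generates `k[G ⧸ H]`, and a homomorphism out of `k[G ⧸ H]` amounts to the choice of
an `H`-fixed image of this generator. Hence `k[G ⧸ H]` is projective, i.e. the surjection
`k[G] → k[G ⧸ H]` splits, iff some `a ∈ k[G]` fixed by left multiplication by `H` maps to the
generator. The coefficients of such an `a` are constant on `H` and sum to `1` there, so `H` is
finite and `|H|` is invertible in `k`; conversely `a = |H|⁻¹ ∑_{h ∈ H} h` will do.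
-/

open MonoidAlgebra

-- For infinite `α` both sides are `0`, by the junk values of `∑ᶠ` and `Nat.card`.
lemma finsum_const_eq_card_nsmul (α : Type*) {A : Type*} [AddCommMonoid A] (c : A) :
    ∑ᶠ _ : α, c = Nat.card α • c := by
  obtain rfl | hc := eq_or_ne c 0
  · simp
  cases finite_or_infinite α
  · have := Fintype.ofFinite α
    simp [finsum_eq_sum_of_fintype]
  · rw [finsum_of_infinite_support (by simpa [Function.support_const hc] using Set.infinite_univ)]
    simp

lemma coeff_eq_coeff_one_of_single_mul_eq {k G : Type*} [Semiring k] [Group G]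
    {a : MonoidAlgebra k G} {g : G} (hga : single g 1 * a = a) : a.coeff g = a.coeff 1 := by
  simpa [coeff_single_mul_apply] using congrArg (fun x ↦ x.coeff g) hga.symm

lemma quotient_mk_eq_mk_one_iff {G : Type*} [Group G] {H : Subgroup G} {g : G} :
    (g : G ⧸ H) = ((1 : G) : G ⧸ H) ↔ g ∈ H := by
  simp [QuotientGroup.eq]

/-- The permutation module `k[G ⧸ H]` of `G` over the group algebra `k[G]`. -/
abbrev CosetModule (k : Type*) {G : Type*} [CommSemiring k] [Group G] (H : Subgroup G) : Type _ :=
  (Representation.ofMulAction k G (G ⧸ H)).asModule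

namespace CosetModule

variable {k G : Type*} [CommSemiring k] [Group G] {H : Subgroup G}

variable (k H) in
/-- The coset `H`, as the standard generator of the cyclic `k[G]`-module `k[G ⧸ H]`. -/
noncomputable def base : CosetModule k H :=
  (Representation.ofMulAction k G (G ⧸ H)).asModuleEquiv.symm (single ((1 : G) : G ⧸ H) 1)

lemma single_smul_base (g : G) (r : k) :
    single g r • base k H =
      (Representation.ofMulAction k G (G ⧸ H)).asModuleEquiv.symm (single (g : G ⧸ H) r) := by
  rw [LinearEquiv.eq_symm_apply, Representation.asModuleEquiv_map_smul, base,
    LinearEquiv.apply_symm_apply, Representation.asAlgebraHom_single, LinearMap.smul_apply,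
    Representation.ofMulAction_single, MulAction.Quotient.smul_coe]
  simp

lemma single_smul_base_of_mem {h : G} (hh : h ∈ H) : single h (1 : k) • base k H = base k H := by
  rw [single_smul_base, base, quotient_mk_eq_mk_one_iff.2 hh]

lemma exists_smul_base_eq (v : CosetModule k H) : ∃ a : MonoidAlgebra k G, a • base k H = v := by
  obtain ⟨x, rfl⟩ := (Representation.ofMulAction k G (G ⧸ H)).asModuleEquiv.symm.surjective v
  induction x using MonoidAlgebra.induction_linear with
  | zero => exact ⟨0, by simp⟩
  | add x y hx hy =>
    obtain ⟨a, ha⟩ := hx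
    obtain ⟨b, hb⟩ := hy
    exact ⟨a + b, by rw [add_smul, ha, hb, map_add]⟩
  | single q r =>
    obtain ⟨g, rfl⟩ := QuotientGroup.mk_surjective q
    exact ⟨single g r, single_smul_base g r⟩

section UniversalProperty

variable {M : Type*} [AddCommMonoid M] [Module (MonoidAlgebra k G) M]

lemma hom_ext {f f' : CosetModule k H →ₗ[MonoidAlgebra k G] M}
    (hff' : f (base k H) = f' (base k H)) : f = f' := by
  ext v
  obtain ⟨a, rfl⟩ := exists_smul_base_eq v
  rw [map_smul, map_smul, hff']

/-- The map `gH ↦ g • m` determined by an `H`-fixed vector `m`. -/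
noncomputable def orbitMap (m : M) (hm : ∀ h ∈ H, single h (1 : k) • m = m) : G ⧸ H → M :=
  Quotient.lift (fun g : G ↦ single g (1 : k) • m) fun g g' hgg' ↦ by
    have hmem : g⁻¹ * g' ∈ H := QuotientGroup.leftRel_apply.1 hgg'
    calc single g (1 : k) • m = single g (1 : k) • single (g⁻¹ * g') (1 : k) • m := by
          rw [hm _ hmem]
      _ = single g' (1 : k) • m := by simp [smul_smul, single_mul_single]

variable [Module k M]

/-- The `k`-linear extension of `orbitMap` to `k[G ⧸ H]`. -/
noncomputable def linearLift (m : M) (hm : ∀ h ∈ H, single h (1 : k) • m = m) :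
    CosetModule k H →ₗ[k] M :=
  Finsupp.linearCombination k (orbitMap m hm) ∘ₗ (coeffLinearEquiv k).toLinearMap ∘ₗ
    (Representation.ofMulAction k G (G ⧸ H)).asModuleEquiv.toLinearMap

variable [IsScalarTower k (MonoidAlgebra k G) M]

lemma linearLift_smul_base (m : M) (hm : ∀ h ∈ H, single h (1 : k) • m = m)
    (a : MonoidAlgebra k G) : linearLift m hm (a • base k H) = a • m := by
  induction a using MonoidAlgebra.induction_linear with
  | zero => simp
  | add a b ha hb => rw [add_smul, map_add, ha, hb, add_smul]
  | single g r =>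
    calc linearLift m hm (single g r • base k H) = r • single g (1 : k) • m := by
          rw [single_smul_base]
          simp [linearLift, orbitMap]
      _ = single g r • m := by rw [← smul_assoc, smul_single', mul_one]

lemma exists_hom_apply_base_eq {m : M} (hm : ∀ h ∈ H, single h (1 : k) • m = m) :
    ∃ f : CosetModule k H →ₗ[MonoidAlgebra k G] M, f (base k H) = m := by
  refine ⟨equivariantOfLinearOfComm (linearLift m hm) fun g v ↦ ?_, ?_⟩
  · obtain ⟨a, rfl⟩ := exists_smul_base_eq v
    rw [smul_smul, linearLift_smul_base, linearLift_smul_base, mul_smul]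
  · simpa using linearLift_smul_base m hm 1

end UniversalProperty

lemma projective_iff_exists_fixed :
    Module.Projective (MonoidAlgebra k G) (CosetModule k H) ↔
      ∃ a : MonoidAlgebra k G,
        (∀ h ∈ H, single h 1 * a = a) ∧ a • base k H = base k H := by
  constructor
  · intro _
    obtain ⟨s, hs⟩ := Module.projective_lifting_property
      (LinearMap.toSpanSingleton (MonoidAlgebra k G) _ (base k H)) .id exists_smul_base_eq
    refine ⟨s (base k H), fun h hh ↦ ?_, LinearMap.congr_fun hs (base k H)⟩
    rw [← smul_eq_mul, ← map_smul, single_smul_base_of_mem hh]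
  · rintro ⟨a, hfixed, hbase⟩
    obtain ⟨i, hi⟩ := exists_hom_apply_base_eq (k := k) (m := a) hfixed
    refine .of_split i (LinearMap.toSpanSingleton _ _ (base k H)) (hom_ext ?_)
    rw [LinearMap.comp_apply, hi, LinearMap.toSpanSingleton_apply, hbase, LinearMap.id_apply]

lemma coeff_smul_base_one (a : MonoidAlgebra k G) :
    ((Representation.ofMulAction k G (G ⧸ H)).asModuleEquiv (a • base k H)).coeff
      ((1 : G) : G ⧸ H) = ∑ᶠ h : H, a.coeff h := by
  induction a using MonoidAlgebra.induction_linear with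
  | zero => simp
  | add a b ha hb =>
    have hfinite (x : MonoidAlgebra k G) : (fun h : H ↦ x.coeff h).HasFiniteSupport :=
      x.coeff.hasFiniteSupport.preimage Subtype.val_injective.injOn
    simp only [add_smul, map_add, coeff_add, Finsupp.add_apply, ha, hb]
    rw [finsum_add_distrib (hfinite a) (hfinite b)]
  | single g r =>
    rw [single_smul_base, LinearEquiv.apply_symm_apply, coeff_single, coeff_single]
    by_cases hg : g ∈ H
    · rw [quotient_mk_eq_mk_one_iff.2 hg, Finsupp.single_eq_same,
        finsum_eq_single _ ⟨g, hg⟩ fun h hne ↦ Finsupp.single_eq_of_ne (Subtype.coe_ne_coe.2 hne),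
        Finsupp.single_eq_same]
    · have hne (h : H) : (h : G) ≠ g := fun heq ↦ hg (heq ▸ h.2)
      rw [Finsupp.single_eq_of_ne' (mt quotient_mk_eq_mk_one_iff.1 hg),
        finsum_eq_zero_of_forall_eq_zero fun h ↦ Finsupp.single_eq_of_ne (hne h)]

lemma isUnit_card_of_fixed {a : MonoidAlgebra k G} (hfixed : ∀ h ∈ H, single h 1 * a = a)
    (hbase : a • base k H = base k H) : IsUnit (Nat.card H : k) := by
  refine .of_mul_eq_one (a.coeff 1) ?_
  calc Nat.card H * a.coeff 1 = ∑ᶠ h : H, a.coeff h := by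
        rw [← nsmul_eq_mul, ← finsum_const_eq_card_nsmul]
        exact finsum_congr fun h ↦ (coeff_eq_coeff_one_of_single_mul_eq (hfixed h h.2)).symm
    _ = 1 := by rw [← coeff_smul_base_one, hbase]; simp [base]

lemma exists_fixed_of_isUnit_card [Finite H] (hcard : IsUnit (Nat.card H : k)) :
    ∃ a : MonoidAlgebra k G, (∀ h ∈ H, single h 1 * a = a) ∧ a • base k H = base k H := by
  have := Fintype.ofFinite H
  rw [Nat.card_eq_fintype_card] at hcard
  have := hcard.invertible
  let inclusion := mapDomainAlgHom k k H.subtype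
  refine ⟨inclusion (GroupAlgebra.average k H), fun h hh ↦ ?_, ?_⟩
  · have hsingle : single h 1 = inclusion (single ⟨h, hh⟩ 1) := by simp [inclusion]
    rw [hsingle, ← map_mul, GroupAlgebra.mul_average_left]
  · calc inclusion (GroupAlgebra.average k H) • base k H
        = ⅟(Fintype.card H : k) • ∑ h : H, single (h : G) (1 : k) • base k H := by
          simp [inclusion, GroupAlgebra.average, Finset.sum_smul]
      _ = ⅟(Fintype.card H : k) • (Fintype.card H : k) • base k H := by
          simp only [single_smul_base_of_mem (SetLike.coe_mem _), Finset.sum_const,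
            Finset.card_univ, Nat.cast_smul_eq_nsmul]
      _ = base k H := by rw [smul_smul, invOf_mul_self, one_smul]

end CosetModule

theorem stmt10_general {k G : Type*} [CommSemiring k] [Nontrivial k] [Group G] (H : Subgroup G) :
    Module.Projective (MonoidAlgebra k G) (Representation.ofMulAction k G (G ⧸ H)).asModule
      ↔ Finite H ∧ IsUnit (Nat.card H : k) := by
  rw [CosetModule.projective_iff_exists_fixed]
  constructor
  · rintro ⟨a, hfixed, hbase⟩
    have hunit := CosetModule.isUnit_card_of_fixed hfixed hbase
    exact ⟨Nat.finite_of_card_ne_zero fun h0 ↦ by simp [h0] at hunit, hunit⟩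
  · rintro ⟨_, hunit⟩
    exact CosetModule.exists_fixed_of_isUnit_card hunit

/-- The permutation `F[G]`-module on the coset space `G ⧸ H` is projective if and only if
the characteristic of the field `F` does not divide `|H|`. -/
theorem stmt10 {F G : Type*} [Field F] [Group G] [Fintype G] (H : Subgroup G) :
    Module.Projective (MonoidAlgebra F G)
        (Representation.ofMulAction F G (G ⧸ H)).asModule
      ↔ ¬ (ringChar F ∣ Fintype.card H) := by
  rw [← ringChar.spec, ← Nat.card_eq_fintype_card, ← ne_eq, ← isUnit_iff_ne_zero]
  exact (stmt10_general H).trans (and_iff_right inferInstance)
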